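/- Fix λ > 0 and define the sequence X₀ ≡ 0, X_{n+1} = 𝐓Xₙ for n ≥ 0; then Xₙ is a.s. nondecreasing in n and Xₙ ↗ X_∞ a.s. for some [0,∞]-valued random variable X_∞. The problem of minimizing h(X) + λ·E[ρX] over X ∈ L⁰₊ has a solution if and only if E[ρ·X_∞] < ∞; and in that case X_∞ is a solution. -/

import Mathlib

/-!
The risk measure `h` is convex with marginal `-ψ_X(X)`: the inequality `e^t ≥ 1 + t` at
`t = -a(Y - X) + log φ_X(a) - log φ_Y(a)`, weighted by `e^{-aX}/φ_X(a)` and integrated over `ω`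
and `a`, reads `h(X) - h(Y) ≤ E[ψ_X(X)(Y - X)]`. Since `X = 𝐓X` says exactly that `ψ_X(X) ≤ λρ`
with equality on `{X > 0}`, every fixed point of `𝐓` with `E[ρX] < ∞` is a minimizer of
`h(X) + λ E[ρX]`.

A larger payoff has a smaller `φ`, hence a larger `ψ` and a larger transform: `𝐓` is monotone and
its iterates from `0` increase. If `E[ρX_∞] < ∞`, then `X_∞` is a.s. finite, and dominated
convergence in `ψ` shows that it is a fixed point of `𝐓`.

Conversely, raising a minimizer `X` by a small `ε` on an event cannot lower the objective, which
forces `ψ_X(X) ≤ λρ`, that is, `𝐓X ≤ X`. By monotonicity all iterates stay below `X`, so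
`E[ρX_∞] ≤ E[ρX] < ∞`.
-/

open MeasureTheory Filter Set
open scoped ENNReal

noncomputable section

variable {Ω : Type*} [MeasurableSpace Ω]

/-- Entropic risk measure `h_a(X) = (1/a) log E[e^{-aX}]`. -/
def entropic (P : Measure Ω) (a : ℝ) (X : Ω → ℝ) : ℝ :=
  (1 / a) * Real.log (∫ ω, Real.exp (-a * X ω) ∂P)

/-- Weighted entropic risk measure `h(X) = ∫_{[a₀,a₁]} h_a(X) m(da)`. -/
def werm (P : Measure Ω) (m : Measure ℝ) (a₀ a₁ : ℝ) (X : Ω → ℝ) : ℝ :=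
  ∫ a in Set.Icc a₀ a₁, entropic P a X ∂m

/-- Marginal risk density transform `h′(X) = -∫_{[a₀,a₁]} e^{-aX}/E[e^{-aX}] m(da)`. -/
def hprime (P : Measure Ω) (m : Measure ℝ) (a₀ a₁ : ℝ) (X : Ω → ℝ) (ω : Ω) : ℝ :=
  -∫ a in Set.Icc a₀ a₁, Real.exp (-a * X ω) / (∫ ω', Real.exp (-a * X ω') ∂P) ∂m

/-- Extended-real-valued expectation `E[f] = ∫ f⁺ - ∫ f⁻ ∈ [-∞,∞]`. -/
def eint (P : Measure Ω) (f : Ω → ℝ) : EReal :=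
  ((∫⁻ ω, ENNReal.ofReal (f ω) ∂P : ℝ≥0∞) : EReal)
    - ((∫⁻ ω, ENNReal.ofReal (-(f ω)) ∂P : ℝ≥0∞) : EReal)

/-- `E[ρX] ∈ [0,∞]` for a nonnegative payoff. -/
def budget (P : Measure Ω) (ρ X : Ω → ℝ) : ℝ≥0∞ := ∫⁻ ω, ENNReal.ofReal (ρ ω * X ω) ∂P

/-- `X ∈ L⁰₊`: a nonnegative random variable. -/
def Lpos (P : Measure Ω) (X : Ω → ℝ) : Prop := Measurable X ∧ ∀ᵐ ω ∂P, 0 ≤ X ω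

/-- Objective of the Lagrangian risk-minimization problem: `h(X) + λ E[ρX]`. -/
def robj (P : Measure Ω) (m : Measure ℝ) (a₀ a₁ : ℝ) (ρ : Ω → ℝ) (lam : ℝ) (X : Ω → ℝ) : EReal :=
  ((werm P m a₀ a₁ X : ℝ) : EReal) + (lam : EReal) * ((budget P ρ X : ℝ≥0∞) : EReal)

/-- `ψ_X(y) = ∫_{[a₀,a₁]} e^{-ay} / E[e^{-aX}] m(da)`. -/
def psi (P : Measure Ω) (m : Measure ℝ) (a₀ a₁ : ℝ) (X : Ω → ℝ) (y : ℝ) : ℝ :=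
  ∫ a in Set.Icc a₀ a₁, Real.exp (-a * y) / (∫ ω, Real.exp (-a * X ω) ∂P) ∂m

/-- Inverse of `ψ_X` on `(0,∞)` (realized via `sSup`, since `ψ_X` is continuous, strictly
decreasing with limits `∞` at `-∞` and `0` at `∞`). -/
def psiInv (P : Measure Ω) (m : Measure ℝ) (a₀ a₁ : ℝ) (X : Ω → ℝ) (z : ℝ) : ℝ :=
  sSup {y : ℝ | z ≤ psi P m a₀ a₁ X y}

/-- The transform `𝐓X = max(ψ_X⁻¹(λρ), 0)`. -/
def Ttrans (P : Measure Ω) (m : Measure ℝ) (a₀ a₁ lam : ℝ) (ρ : Ω → ℝ) (X : Ω → ℝ) : Ω → ℝ :=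
  fun ω => max (psiInv P m a₀ a₁ X (lam * ρ ω)) 0

/-- `X ∈ 𝒳(x)`: nonnegative and `E[ρX] ≤ x`. -/
def feasible (P : Measure Ω) (ρ : Ω → ℝ) (x : ℝ) (X : Ω → ℝ) : Prop :=
  Lpos P X ∧ budget P ρ X ≤ ENNReal.ofReal x

/-- `γ₁(x)`: the minimal value of `h` over `𝒳(x)`. -/
def gamma1 (P : Measure Ω) (m : Measure ℝ) (a₀ a₁ : ℝ) (ρ : Ω → ℝ) (x : ℝ) : ℝ :=
  sInf (werm P m a₀ a₁ '' {X | feasible P ρ x X})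

/-- Expected utility `E[U(X)] ∈ [-∞,∞]`. -/
def eutil (P : Measure Ω) (U : ℝ → ℝ) (X : Ω → ℝ) : EReal := eint P (fun ω => U (X ω))

/-- Full Lagrangian objective `E[U(X)] - μ h(X) - λ E[ρX]`. -/
def fullObj (P : Measure Ω) (m : Measure ℝ) (a₀ a₁ : ℝ) (ρ : Ω → ℝ) (U : ℝ → ℝ)
    (μ lam : ℝ) (X : Ω → ℝ) : EReal :=
  eutil P U X - ((μ * werm P m a₀ a₁ X : ℝ) : EReal)
    - (lam : EReal) * ((budget P ρ X : ℝ≥0∞) : EReal)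

open ProbabilityTheory Topology

variable {P : Measure Ω} {m : Measure ℝ} {a₀ a₁ lam : ℝ} {ρ X Y : Ω → ℝ}

/-! ### The Laplace transform of a payoff -/

section Laplace

variable [IsFiniteMeasure P] {a b : ℝ}

lemma Lpos.integrable_exp_neg_mul (hX : Lpos P X) (ha : 0 ≤ a) :
    Integrable (fun ω => Real.exp (-a * X ω)) P := by
  have hmX := hX.1
  refine Integrable.of_bound (C := 1) (by fun_prop) ?_
  filter_upwards [hX.2] with ω hω
  rw [Real.norm_of_nonneg (Real.exp_pos _).le, Real.exp_le_one_iff]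
  exact mul_nonpos_of_nonpos_of_nonneg (neg_nonpos.2 ha) hω

lemma Lpos.mgf_neg_pos [NeZero P] (hX : Lpos P X) (ha : 0 ≤ a) : 0 < mgf X P (-a) :=
  mgf_pos' (NeZero.ne P) (hX.integrable_exp_neg_mul ha)

lemma Lpos.mgf_neg_le_mgf_neg (hX : Lpos P X) (ha : 0 ≤ a) (hab : a ≤ b) :
    mgf X P (-b) ≤ mgf X P (-a) := by
  refine integral_mono_ae (hX.integrable_exp_neg_mul (ha.trans hab))
    (hX.integrable_exp_neg_mul ha) ?_
  filter_upwards [hX.2] with ω hω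
  gcongr

lemma Lpos.continuousOn_mgf_neg (hX : Lpos P X) :
    ContinuousOn (fun a => mgf X P (-a)) (Ioi 0) := by
  have hsub : Iio 0 ⊆ interior (integrableExpSet X P) :=
    interior_maximal (fun t ht => by
      have h := hX.integrable_exp_neg_mul (neg_nonneg.2 (le_of_lt ht))
      rwa [neg_neg] at h) isOpen_Iio
  exact continuousOn_mgf.comp continuousOn_neg fun _ ha => hsub (neg_lt_zero.2 (mem_Ioi.1 ha))

lemma tendsto_mgf_neg {ι : Type*} {l : Filter ι} [l.IsCountablyGenerated] {Z : ι → Ω → ℝ}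
    (hZ : ∀ i, Lpos P (Z i)) (hlim : ∀ᵐ ω ∂P, Tendsto (fun i => Z i ω) l (𝓝 (X ω)))
    (ha : 0 ≤ a) : Tendsto (fun i => mgf (Z i) P (-a)) l (𝓝 (mgf X P (-a))) := by
  refine tendsto_integral_filter_of_dominated_convergence (fun _ => 1)
    (Eventually.of_forall fun i => ((hZ i).integrable_exp_neg_mul ha).aestronglyMeasurable)
    (Eventually.of_forall fun i => ?_) (integrable_const _) ?_
  · filter_upwards [(hZ i).2] with ω hω
    rw [Real.norm_of_nonneg (Real.exp_pos _).le, Real.exp_le_one_iff]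
    exact mul_nonpos_of_nonpos_of_nonneg (neg_nonpos.2 ha) hω
  · filter_upwards [hlim] with ω hω
    exact (Real.continuous_exp.tendsto _).comp (hω.const_mul (-a))

end Laplace

/-! ### The function `ψ_X` and its inverse -/

/-- The integrand `e^{-ay}/φ_X(a)` of `ψ_X(y)`, where `φ_X(a) = E[e^{-aX}]` is written
`mgf X P (-a)`. At `y = X(ω)` it is the density of the exponential tilting of `P` by `-aX`. -/
def expTilt (P : Measure Ω) (X : Ω → ℝ) (a y : ℝ) : ℝ := Real.exp (-a * y) / mgf X P (-a)

lemma psi_eq_integral_expTilt (P : Measure Ω) (m : Measure ℝ) (a₀ a₁ : ℝ) (X : Ω → ℝ) (y : ℝ) :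
    psi P m a₀ a₁ X y = ∫ a in Icc a₀ a₁, expTilt P X a y ∂m := rfl

lemma expTilt_add (P : Measure Ω) (X : Ω → ℝ) (a y t : ℝ) :
    expTilt P X a (y + t) = Real.exp (-a * t) * expTilt P X a y := by
  rw [expTilt, expTilt, mul_add, Real.exp_add]
  ring

section ExpTilt

variable [IsFiniteMeasure P] {a : ℝ}

lemma integrable_expTilt (hX : Lpos P X) (ha : 0 ≤ a) :
    Integrable (fun ω => expTilt P X a (X ω)) P :=
  (hX.integrable_exp_neg_mul ha).div_const _

variable [NeZero P]

lemma expTilt_pos (hX : Lpos P X) (ha : 0 ≤ a) (y : ℝ) : 0 < expTilt P X a y :=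
  div_pos (Real.exp_pos _) (hX.mgf_neg_pos ha)

lemma expTilt_le_expTilt_of_ae_le (hX : Lpos P X) (hY : Lpos P Y) (hXY : X ≤ᵐ[P] Y)
    (ha : 0 ≤ a) (y : ℝ) : expTilt P X a y ≤ expTilt P Y a y :=
  div_le_div_of_nonneg_left (Real.exp_pos _).le (hY.mgf_neg_pos ha)
    (mgf_anti_of_nonpos hXY (neg_nonpos.2 ha) (hX.integrable_exp_neg_mul ha))

lemma integral_expTilt (hX : Lpos P X) (ha : 0 ≤ a) : ∫ ω, expTilt P X a (X ω) ∂P = 1 :=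
  (integral_div _ _).trans (div_self (hX.mgf_neg_pos ha).ne')

lemma continuousOn_expTilt (hX : Lpos P X) (y : ℝ) :
    ContinuousOn (fun a => expTilt P X a y) (Ioi 0) :=
  ContinuousOn.div (by fun_prop) hX.continuousOn_mgf_neg
    fun _ ha => (hX.mgf_neg_pos (le_of_lt ha)).ne'

lemma continuousOn_entropic (hX : Lpos P X) :
    ContinuousOn (fun a => entropic P a X) (Ioi 0) :=
  (continuousOn_const.div continuousOn_id fun _ ha => ne_of_gt ha).mul
    (hX.continuousOn_mgf_neg.log fun _ ha => (hX.mgf_neg_pos (le_of_lt ha)).ne')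

lemma psi_nonneg (ha₀ : 0 < a₀) (hX : Lpos P X) (y : ℝ) : 0 ≤ psi P m a₀ a₁ X y :=
  setIntegral_nonneg measurableSet_Icc fun _ ha => (expTilt_pos hX (ha₀.le.trans ha.1) y).le

-- A junk value: the set whose supremum defines `psiInv` is then all of `ℝ`.
lemma psiInv_of_nonpos (ha₀ : 0 < a₀) (hX : Lpos P X) {z : ℝ} (hz : z ≤ 0) :
    psiInv P m a₀ a₁ X z = 0 := by
  have huniv : {y | z ≤ psi P m a₀ a₁ X y} = univ :=
    eq_univ_of_forall fun y => hz.trans (psi_nonneg ha₀ hX y)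
  rw [psiInv, huniv, Real.sSup_univ]

end ExpTilt

section Weights

variable [IsLocallyFiniteMeasure m]

lemma integrableOn_Icc_of_continuousOn_Ioi {f : ℝ → ℝ} (ha₀ : 0 < a₀)
    (hf : ContinuousOn f (Ioi 0)) : IntegrableOn f (Icc a₀ a₁) m :=
  (hf.mono fun _ ha => ha₀.trans_le ha.1).integrableOn_Icc

variable [IsFiniteMeasure P] [NeZero P]

lemma integrableOn_expTilt (ha₀ : 0 < a₀) (hX : Lpos P X) (y : ℝ) :
    IntegrableOn (fun a => expTilt P X a y) (Icc a₀ a₁) m :=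
  integrableOn_Icc_of_continuousOn_Ioi ha₀ (continuousOn_expTilt hX y)

lemma psi_pos (ha₀ : 0 < a₀) (hm : m (Icc a₀ a₁) ≠ 0) (hX : Lpos P X) (y : ℝ) :
    0 < psi P m a₀ a₁ X y := by
  have htilt : ∀ a ∈ Icc a₀ a₁, 0 < expTilt P X a y :=
    fun a ha => expTilt_pos hX (ha₀.le.trans ha.1) y
  have hsupp : Icc a₀ a₁ ⊆ Function.support fun a => expTilt P X a y :=
    fun a ha => (htilt a ha).ne'
  rw [psi_eq_integral_expTilt, setIntegral_pos_iff_support_of_nonneg_ae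
    (ae_restrict_of_forall_mem measurableSet_Icc fun a ha => (htilt a ha).le)
    (integrableOn_expTilt ha₀ hX y), inter_eq_right.2 hsupp]
  exact pos_iff_ne_zero.2 hm

lemma psi_le_psi_of_ae_le (ha₀ : 0 < a₀) (hX : Lpos P X) (hY : Lpos P Y) (hXY : X ≤ᵐ[P] Y)
    (y : ℝ) : psi P m a₀ a₁ X y ≤ psi P m a₀ a₁ Y y :=
  setIntegral_mono_on (integrableOn_expTilt ha₀ hX y) (integrableOn_expTilt ha₀ hY y)
    measurableSet_Icc fun _ ha => expTilt_le_expTilt_of_ae_le hX hY hXY (ha₀.le.trans ha.1) y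

lemma psi_add_le (ha₀ : 0 < a₀) (hX : Lpos P X) (y : ℝ) {t : ℝ} (ht : 0 ≤ t) :
    psi P m a₀ a₁ X (y + t) ≤ Real.exp (-a₀ * t) * psi P m a₀ a₁ X y := by
  rw [psi_eq_integral_expTilt, psi_eq_integral_expTilt, ← integral_const_mul]
  refine setIntegral_mono_on (integrableOn_expTilt ha₀ hX (y + t))
    ((integrableOn_expTilt ha₀ hX y).const_mul _) measurableSet_Icc fun a ha => ?_
  have htilt := expTilt_pos hX (ha₀.le.trans ha.1) y
  rw [expTilt_add]
  gcongr
  exact ha.1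

lemma le_psi_add (ha₀ : 0 < a₀) (hX : Lpos P X) (y : ℝ) {t : ℝ} (ht : 0 ≤ t) :
    Real.exp (-a₁ * t) * psi P m a₀ a₁ X y ≤ psi P m a₀ a₁ X (y + t) := by
  rw [psi_eq_integral_expTilt, psi_eq_integral_expTilt, ← integral_const_mul]
  refine setIntegral_mono_on ((integrableOn_expTilt ha₀ hX y).const_mul _)
    (integrableOn_expTilt ha₀ hX (y + t)) measurableSet_Icc fun a ha => ?_
  have htilt := expTilt_pos hX (ha₀.le.trans ha.1) y
  rw [expTilt_add]
  gcongr
  exact ha.2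

lemma strictAnti_psi (ha₀ : 0 < a₀) (hm : m (Icc a₀ a₁) ≠ 0) (hX : Lpos P X) :
    StrictAnti (psi P m a₀ a₁ X) := by
  intro y y' hy
  have ht : 0 < y' - y := sub_pos.2 hy
  calc psi P m a₀ a₁ X y' = psi P m a₀ a₁ X (y + (y' - y)) := by rw [add_sub_cancel]
    _ ≤ Real.exp (-a₀ * (y' - y)) * psi P m a₀ a₁ X y := psi_add_le ha₀ hX y ht.le
    _ < psi P m a₀ a₁ X y :=
      mul_lt_of_lt_one_left (psi_pos ha₀ hm hX y)
        (Real.exp_lt_one_iff.2 (mul_neg_of_neg_of_pos (neg_lt_zero.2 ha₀) ht))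

lemma tendsto_psi {ι : Type*} {l : Filter ι} [l.IsCountablyGenerated] {Z : ι → Ω → ℝ}
    {u : ι → ℝ} {y : ℝ} (ha₀ : 0 < a₀) (hX : Lpos P X) (hZ : ∀ i, Lpos P (Z i))
    (hlim : ∀ᵐ ω ∂P, Tendsto (fun i => Z i ω) l (𝓝 (X ω))) (hu : Tendsto u l (𝓝 y)) :
    Tendsto (fun i => psi P m a₀ a₁ (Z i) (u i)) l (𝓝 (psi P m a₀ a₁ X y)) := by
  -- `φ_{Z i}(a) ≥ φ_{Z i}(|a₁|)`, and the latter tends to `φ_X(|a₁|) > 0`: this bounds the tilts.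
  set c := mgf X P (-|a₁|) / 2
  have hmgf_pos : 0 < mgf X P (-|a₁|) := hX.mgf_neg_pos (abs_nonneg a₁)
  have hc_pos : 0 < c := half_pos hmgf_pos
  have hmgf : ∀ᶠ i in l, c < mgf (Z i) P (-|a₁|) :=
    (tendsto_mgf_neg hZ hlim (abs_nonneg a₁)).eventually_const_lt (half_lt_self hmgf_pos)
  have hu_bound : ∀ᶠ i in l, |u i| < |y| + 1 := hu.abs.eventually_lt_const (lt_add_one _)
  refine tendsto_integral_filter_of_dominated_convergence
    (fun _ => Real.exp (|a₁| * (|y| + 1)) / c)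
    (Eventually.of_forall fun i => (integrableOn_expTilt ha₀ (hZ i) (u i)).aestronglyMeasurable)
    ?_ continuousOn_const.integrableOn_Icc ?_
  · filter_upwards [hmgf, hu_bound] with i hi hui
    refine ae_restrict_of_forall_mem measurableSet_Icc fun a ha => ?_
    have ha_nonneg : 0 ≤ a := ha₀.le.trans ha.1
    have ha_le : a ≤ |a₁| := ha.2.trans (le_abs_self a₁)
    have hexp : -a * u i ≤ |a₁| * (|y| + 1) := calc
      -a * u i ≤ |-a * u i| := le_abs_self _
      _ = a * |u i| := by rw [abs_mul, abs_neg, abs_of_nonneg ha_nonneg]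
      _ ≤ |a₁| * (|y| + 1) := by gcongr
    change ‖expTilt P (Z i) a (u i)‖ ≤ _
    rw [Real.norm_of_nonneg (expTilt_pos (hZ i) ha_nonneg _).le]
    exact div_le_div₀ (Real.exp_pos _).le (Real.exp_le_exp.2 hexp) hc_pos
      (hi.le.trans ((hZ i).mgf_neg_le_mgf_neg ha_nonneg ha_le))
  · refine ae_restrict_of_forall_mem measurableSet_Icc fun a ha => ?_
    have ha_nonneg : 0 ≤ a := ha₀.le.trans ha.1
    exact ((Real.continuous_exp.tendsto _).comp (hu.const_mul (-a))).div
      (tendsto_mgf_neg hZ hlim ha_nonneg) (hX.mgf_neg_pos ha_nonneg).ne'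

lemma continuous_psi (ha₀ : 0 < a₀) (hX : Lpos P X) : Continuous (psi P m a₀ a₁ X) :=
  continuous_iff_continuousAt.2 fun _ =>
    tendsto_psi ha₀ hX (fun _ => hX) (Eventually.of_forall fun _ => tendsto_const_nhds) tendsto_id

lemma tendsto_psi_atTop (ha₀ : 0 < a₀) (hX : Lpos P X) :
    Tendsto (psi P m a₀ a₁ X) atTop (𝓝 0) := by
  have hexp : Tendsto (fun y => Real.exp (-a₀ * y) * psi P m a₀ a₁ X 0) atTop (𝓝 0) := by
    have h := (Real.tendsto_exp_atBot.comp (tendsto_id.const_mul_atTop_of_neg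
      (neg_lt_zero.2 ha₀))).mul_const (psi P m a₀ a₁ X 0)
    rwa [zero_mul] at h
  refine squeeze_zero' (Eventually.of_forall (psi_nonneg ha₀ hX)) ?_ hexp
  filter_upwards [eventually_ge_atTop 0] with y hy
  simpa only [zero_add] using psi_add_le ha₀ hX 0 hy

lemma tendsto_psi_atBot (ha₀ : 0 < a₀) (hm : m (Icc a₀ a₁) ≠ 0) (hX : Lpos P X) :
    Tendsto (psi P m a₀ a₁ X) atBot atTop := by
  have hexp : Tendsto (fun y => Real.exp (-a₀ * y) * psi P m a₀ a₁ X 0) atBot atTop :=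
    (Real.tendsto_exp_atTop.comp (tendsto_id.const_mul_atBot_of_neg
      (neg_lt_zero.2 ha₀))).atTop_mul_const (psi_pos ha₀ hm hX 0)
  refine tendsto_atTop_mono' _ ?_ hexp
  filter_upwards [eventually_le_atBot 0] with y hy
  have h := psi_add_le (m := m) (a₁ := a₁) ha₀ hX y (neg_nonneg.2 hy)
  rw [add_neg_cancel] at h
  calc Real.exp (-a₀ * y) * psi P m a₀ a₁ X 0
      ≤ Real.exp (-a₀ * y) * (Real.exp (-a₀ * -y) * psi P m a₀ a₁ X y) := by gcongr
    _ = psi P m a₀ a₁ X y := by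
      rw [← mul_assoc, ← Real.exp_add, ← mul_add, add_neg_cancel, mul_zero, Real.exp_zero, one_mul]

lemma psi_psiInv (ha₀ : 0 < a₀) (hm : m (Icc a₀ a₁) ≠ 0) (hX : Lpos P X) {z : ℝ} (hz : 0 < z) :
    psi P m a₀ a₁ X (psiInv P m a₀ a₁ X z) = z := by
  obtain ⟨y, rfl⟩ : z ∈ range (psi P m a₀ a₁ X) :=
    mem_range_of_exists_le_of_exists_ge (continuous_psi ha₀ hX)
      ((tendsto_psi_atTop ha₀ hX).eventually_le_const hz).exists
      ((tendsto_psi_atBot ha₀ hm hX).eventually_ge_atTop z).exists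
  simp only [psiInv, (strictAnti_psi ha₀ hm hX).le_iff_ge]
  exact congrArg _ csSup_Iic

lemma psiInv_le_iff (ha₀ : 0 < a₀) (hm : m (Icc a₀ a₁) ≠ 0) (hX : Lpos P X) {y z : ℝ}
    (hz : 0 < z) : psiInv P m a₀ a₁ X z ≤ y ↔ psi P m a₀ a₁ X y ≤ z := by
  rw [← (strictAnti_psi ha₀ hm hX).le_iff_ge, psi_psiInv ha₀ hm hX hz]

lemma psiInv_le_psiInv_of_ae_le (ha₀ : 0 < a₀) (hm : m (Icc a₀ a₁) ≠ 0) (hX : Lpos P X)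
    (hY : Lpos P Y) (hXY : X ≤ᵐ[P] Y) (z : ℝ) :
    psiInv P m a₀ a₁ X z ≤ psiInv P m a₀ a₁ Y z := by
  rcases le_or_gt z 0 with hz | hz
  · rw [psiInv_of_nonpos ha₀ hX hz, psiInv_of_nonpos ha₀ hY hz]
  · rw [psiInv_le_iff ha₀ hm hX hz]
    exact (psi_le_psi_of_ae_le ha₀ hX hY hXY _).trans (psi_psiInv ha₀ hm hY hz).le

lemma measurable_psiInv (ha₀ : 0 < a₀) (hm : m (Icc a₀ a₁) ≠ 0) (hX : Lpos P X) :
    Measurable (psiInv P m a₀ a₁ X) := by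
  refine measurable_of_restrict_of_restrict_compl (measurableSet_Ioi (a := (0 : ℝ)))
    (Antitone.measurable ?_) (measurable_const' ?_)
  · rintro ⟨z, hz⟩ ⟨z', hz'⟩ hzz'
    exact (psiInv_le_iff ha₀ hm hX hz').2 ((psi_psiInv ha₀ hm hX hz).trans_le hzz')
  · rintro ⟨z, hz⟩ ⟨z', hz'⟩
    exact (psiInv_of_nonpos ha₀ hX (not_lt.1 hz)).trans
      (psiInv_of_nonpos ha₀ hX (not_lt.1 hz')).symm

/-! ### The transform `𝐓` -/

lemma ttrans_nonneg (P : Measure Ω) (m : Measure ℝ) (a₀ a₁ lam : ℝ) (ρ X : Ω → ℝ) (ω : Ω) :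
    0 ≤ Ttrans P m a₀ a₁ lam ρ X ω :=
  le_max_right _ _

lemma lpos_ttrans (ha₀ : 0 < a₀) (hm : m (Icc a₀ a₁) ≠ 0) (hρ : Measurable ρ) (hX : Lpos P X) :
    Lpos P (Ttrans P m a₀ a₁ lam ρ X) :=
  ⟨((measurable_psiInv ha₀ hm hX).comp (hρ.const_mul lam)).max measurable_const,
    Eventually.of_forall (ttrans_nonneg P m a₀ a₁ lam ρ X)⟩

lemma ttrans_le_ttrans_of_ae_le (ha₀ : 0 < a₀) (hm : m (Icc a₀ a₁) ≠ 0) (hX : Lpos P X)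
    (hY : Lpos P Y) (hXY : X ≤ᵐ[P] Y) :
    Ttrans P m a₀ a₁ lam ρ X ≤ Ttrans P m a₀ a₁ lam ρ Y :=
  fun _ => max_le_max_right 0 (psiInv_le_psiInv_of_ae_le ha₀ hm hX hY hXY _)

lemma ttrans_le_iff (ha₀ : 0 < a₀) (hm : m (Icc a₀ a₁) ≠ 0) (hX : Lpos P X) {ω : Ω}
    (hz : 0 < lam * ρ ω) {y : ℝ} (hy : 0 ≤ y) :
    Ttrans P m a₀ a₁ lam ρ X ω ≤ y ↔ psi P m a₀ a₁ X y ≤ lam * ρ ω := by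
  rw [Ttrans, max_le_iff, psiInv_le_iff ha₀ hm hX hz, and_iff_left hy]

lemma ttrans_eq_iff (ha₀ : 0 < a₀) (hm : m (Icc a₀ a₁) ≠ 0) (hX : Lpos P X) {ω : Ω}
    (hz : 0 < lam * ρ ω) {x : ℝ} :
    Ttrans P m a₀ a₁ lam ρ X ω = x ↔
      0 ≤ x ∧ psi P m a₀ a₁ X x ≤ lam * ρ ω ∧ (0 < x → psi P m a₀ a₁ X x = lam * ρ ω) := by
  constructor
  · rintro rfl
    have hnonneg := ttrans_nonneg P m a₀ a₁ lam ρ X ω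
    refine ⟨hnonneg, (ttrans_le_iff ha₀ hm hX hz hnonneg).1 le_rfl, fun hpos => ?_⟩
    have hinv : Ttrans P m a₀ a₁ lam ρ X ω = psiInv P m a₀ a₁ X (lam * ρ ω) :=
      max_eq_left ((lt_max_iff.1 hpos).resolve_right (lt_irrefl 0)).le
    rw [hinv, psi_psiInv ha₀ hm hX hz]
  · rintro ⟨hx, hle, heq⟩
    rcases hx.eq_or_lt with rfl | hpos
    · exact ((ttrans_le_iff ha₀ hm hX hz le_rfl).2 hle).antisymm
        (ttrans_nonneg P m a₀ a₁ lam ρ X ω)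
    · have hinv : psiInv P m a₀ a₁ X (lam * ρ ω) = x :=
        (strictAnti_psi ha₀ hm hX).injective
          ((psi_psiInv ha₀ hm hX hz).trans (heq hpos).symm)
      rw [Ttrans, hinv, max_eq_left hx]

lemma ttrans_eq_of_tendsto {ι : Type*} {l : Filter ι} [l.NeBot] [l.IsCountablyGenerated]
    {Z : ι → Ω → ℝ} (ha₀ : 0 < a₀) (hm : m (Icc a₀ a₁) ≠ 0) (hX : Lpos P X)
    (hZ : ∀ i, Lpos P (Z i)) (hlim : ∀ᵐ ω ∂P, Tendsto (fun i => Z i ω) l (𝓝 (X ω))) {ω : Ω}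
    (hz : 0 < lam * ρ ω) {x : ℝ}
    (hx : Tendsto (fun i => Ttrans P m a₀ a₁ lam ρ (Z i) ω) l (𝓝 x)) :
    Ttrans P m a₀ a₁ lam ρ X ω = x := by
  have hpsi := tendsto_psi (m := m) (a₁ := a₁) ha₀ hX hZ hlim hx
  have hT i := (ttrans_eq_iff ha₀ hm (hZ i) hz).1 rfl
  refine (ttrans_eq_iff ha₀ hm hX hz).2 ⟨ge_of_tendsto' hx fun i => (hT i).1,
    le_of_tendsto' hpsi fun i => (hT i).2.1, fun hpos => ?_⟩
  refine tendsto_nhds_unique hpsi (tendsto_const_nhds.congr' ?_)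
  filter_upwards [hx.eventually_const_lt hpos] with i hi using ((hT i).2.2 hi).symm

end Weights

/-! ### The subgradient inequality -/

section Subgradient

variable [IsFiniteMeasure P] [NeZero P]

lemma expTilt_mul_entropic_sub_le (hX : Lpos P X) (hY : Lpos P Y) {a : ℝ} (ha : 0 < a)
    (x y : ℝ) :
    expTilt P X a x * (1 / a + entropic P a X - entropic P a Y) - expTilt P Y a y * (1 / a) ≤
      expTilt P X a x * (y - x) := by
  have hφX := hX.mgf_neg_pos ha.le
  have hφY := hY.mgf_neg_pos ha.le
  set t := -a * (y - x) + Real.log (mgf X P (-a)) - Real.log (mgf Y P (-a))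
  have hratio : expTilt P X a x * Real.exp t = expTilt P Y a y := by
    calc Real.exp (-a * x) / mgf X P (-a) * Real.exp t
        = Real.exp (-a * x) * Real.exp (-a * (y - x)) / mgf Y P (-a) := by
          rw [Real.exp_sub, Real.exp_add, Real.exp_log hφX, Real.exp_log hφY]
          field_simp
      _ = expTilt P Y a y := by
          rw [← Real.exp_add, ← mul_add, add_sub_cancel, expTilt]
  have hsplit : 1 / a + entropic P a X - entropic P a Y = (y - x) + (t + 1) / a := by
    change 1 / a + 1 / a * Real.log (mgf X P (-a)) - 1 / a * Real.log (mgf Y P (-a)) = _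
    simp only [t]
    field_simp
    ring
  have htilt := expTilt_pos hX ha.le x
  calc expTilt P X a x * (1 / a + entropic P a X - entropic P a Y) - expTilt P Y a y * (1 / a)
      = expTilt P X a x * (y - x) + expTilt P X a x * (t + 1 - Real.exp t) / a := by
        rw [hsplit, ← hratio]
        ring
    _ ≤ expTilt P X a x * (y - x) := by
        rw [add_le_iff_nonpos_right]
        exact div_nonpos_of_nonpos_of_nonneg (mul_nonpos_of_nonneg_of_nonpos htilt.le
          (sub_nonpos.2 (Real.add_one_le_exp t))) ha.le

lemma entropic_sub_le (hX : Lpos P X) (hY : Lpos P Y) {a : ℝ} (ha : 0 < a)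
    (hint : Integrable (fun ω => expTilt P X a (X ω) * (Y ω - X ω)) P) :
    entropic P a X - entropic P a Y ≤ ∫ ω, expTilt P X a (X ω) * (Y ω - X ω) ∂P := by
  have htiltX := integrable_expTilt hX ha.le
  have htiltY := integrable_expTilt hY ha.le
  calc entropic P a X - entropic P a Y
      = ∫ ω, expTilt P X a (X ω) * (1 / a + entropic P a X - entropic P a Y)
          - expTilt P Y a (Y ω) * (1 / a) ∂P := by
        rw [integral_sub (htiltX.mul_const _) (htiltY.mul_const _), integral_mul_const,
          integral_mul_const, integral_expTilt hX ha.le, integral_expTilt hY ha.le]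
        ring
    _ ≤ ∫ ω, expTilt P X a (X ω) * (Y ω - X ω) ∂P :=
        integral_mono ((htiltX.mul_const _).sub (htiltY.mul_const _)) hint
          fun ω => expTilt_mul_entropic_sub_le hX hY ha (X ω) (Y ω)

variable [IsLocallyFiniteMeasure m]

lemma integrable_prod_expTilt (ha₀ : 0 < a₀) (hX : Lpos P X) :
    Integrable (fun p : Ω × ℝ => expTilt P X p.2 (X p.1)) (P.prod (m.restrict (Icc a₀ a₁))) := by
  have hmX := hX.1
  have hmgf : AEStronglyMeasurable (fun a => mgf X P (-a)) (m.restrict (Icc a₀ a₁)) :=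
    (integrableOn_Icc_of_continuousOn_Ioi ha₀ hX.continuousOn_mgf_neg).aestronglyMeasurable
  have hmeas : AEStronglyMeasurable (fun p : Ω × ℝ => expTilt P X p.2 (X p.1))
      (P.prod (m.restrict (Icc a₀ a₁))) :=
    (Measurable.aestronglyMeasurable (by fun_prop)).div₀ hmgf.comp_snd
  refine (integrable_prod_iff' hmeas).2 ⟨?_, ?_⟩
  · exact ae_restrict_of_forall_mem measurableSet_Icc fun a ha =>
      integrable_expTilt hX (ha₀.le.trans ha.1)
  · have hone : IntegrableOn (fun _ => (1 : ℝ)) (Icc a₀ a₁) m :=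
      continuousOn_const.integrableOn_Icc
    refine hone.congr (ae_restrict_of_forall_mem measurableSet_Icc fun a ha => ?_)
    have ha_nonneg := ha₀.le.trans ha.1
    simp only [Real.norm_of_nonneg (expTilt_pos hX ha_nonneg _).le, integral_expTilt hX ha_nonneg]

lemma integrable_psi (ha₀ : 0 < a₀) (hX : Lpos P X) :
    Integrable (fun ω => psi P m a₀ a₁ X (X ω)) P :=
  (integrable_prod_expTilt ha₀ hX).integral_prod_left

lemma integrable_prod_expTilt_mul (ha₀ : 0 < a₀) (hX : Lpos P X) {f : Ω → ℝ} (hf : Measurable f)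
    (hint : Integrable (fun ω => psi P m a₀ a₁ X (X ω) * f ω) P) :
    Integrable (fun p : Ω × ℝ => expTilt P X p.2 (X p.1) * f p.1)
      (P.prod (m.restrict (Icc a₀ a₁))) := by
  have hmeas : AEStronglyMeasurable (fun p : Ω × ℝ => f p.1)
    (P.prod (m.restrict (Icc a₀ a₁))) := (hf.comp measurable_fst).aestronglyMeasurable
  refine (integrable_prod_iff ((integrable_prod_expTilt ha₀ hX).aestronglyMeasurable.mul
    hmeas)).2 ⟨?_, ?_⟩
  · exact Eventually.of_forall fun ω => (integrableOn_expTilt ha₀ hX (X ω)).mul_const (f ω)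
  · refine hint.norm.congr (Eventually.of_forall fun ω => ?_)
    simp only [Pi.mul_apply, norm_mul, integral_mul_const,
      Real.norm_of_nonneg (psi_nonneg ha₀ hX (X ω))]
    congr 1
    exact setIntegral_congr_fun measurableSet_Icc fun a ha =>
      (Real.norm_of_nonneg (expTilt_pos hX (ha₀.le.trans ha.1) (X ω)).le).symm

lemma integrableOn_entropic (ha₀ : 0 < a₀) (hX : Lpos P X) :
    IntegrableOn (fun a => entropic P a X) (Icc a₀ a₁) m :=
  integrableOn_Icc_of_continuousOn_Ioi ha₀ (continuousOn_entropic hX)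

lemma werm_sub_le (ha₀ : 0 < a₀) (hX : Lpos P X) (hY : Lpos P Y)
    (hint : Integrable (fun ω => psi P m a₀ a₁ X (X ω) * (Y ω - X ω)) P) :
    werm P m a₀ a₁ X - werm P m a₀ a₁ Y ≤
      ∫ ω, psi P m a₀ a₁ X (X ω) * (Y ω - X ω) ∂P := by
  have hprod := integrable_prod_expTilt_mul ha₀ hX (hY.1.sub hX.1) hint
  have hentX := integrableOn_entropic (m := m) (a₁ := a₁) ha₀ hX
  have hentY := integrableOn_entropic (m := m) (a₁ := a₁) ha₀ hY
  calc werm P m a₀ a₁ X - werm P m a₀ a₁ Y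
      = ∫ a in Icc a₀ a₁, entropic P a X - entropic P a Y ∂m :=
        (integral_sub hentX hentY).symm
    _ ≤ ∫ a in Icc a₀ a₁, ∫ ω, expTilt P X a (X ω) * (Y ω - X ω) ∂P ∂m := by
        refine integral_mono_ae (hentX.sub hentY) hprod.integral_prod_right ?_
        filter_upwards [hprod.prod_left_ae, ae_restrict_mem measurableSet_Icc] with a hinta ha
        exact entropic_sub_le hX hY (ha₀.trans_le ha.1) hinta
    _ = ∫ ω, ∫ a in Icc a₀ a₁, expTilt P X a (X ω) * (Y ω - X ω) ∂m ∂P :=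
        (integral_integral_swap hprod).symm
    _ = ∫ ω, psi P m a₀ a₁ X (X ω) * (Y ω - X ω) ∂P := by
        simp only [integral_mul_const, psi_eq_integral_expTilt]
end Subgradient

/-! ### First-order conditions for the Lagrangian problem -/

section Budget

lemma budget_ne_top_iff (hρ : Lpos P ρ) (hX : Lpos P X) :
    budget P ρ X ≠ ⊤ ↔ Integrable (fun ω => ρ ω * X ω) P :=
  lintegral_ofReal_ne_top_iff_integrable (hρ.1.mul hX.1).aestronglyMeasurable
    (by filter_upwards [hρ.2, hX.2] with ω hρω hω using mul_nonneg hρω hω)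

lemma toReal_budget (hρ : Lpos P ρ) (hX : Lpos P X) :
    (budget P ρ X).toReal = ∫ ω, ρ ω * X ω ∂P :=
  (integral_eq_lintegral_of_nonneg_ae
    (by filter_upwards [hρ.2, hX.2] with ω hρω hω using mul_nonneg hρω hω)
    (hρ.1.mul hX.1).aestronglyMeasurable).symm

lemma robj_eq_top (hlam : 0 < lam) (hX : budget P ρ X = ⊤) : robj P m a₀ a₁ ρ lam X = ⊤ := by
  rw [robj, hX, EReal.coe_ennreal_top, EReal.coe_mul_top_of_pos hlam, EReal.coe_add_top]

lemma robj_eq_coe (hX : budget P ρ X ≠ ⊤) :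
    robj P m a₀ a₁ ρ lam X = ((werm P m a₀ a₁ X + lam * (budget P ρ X).toReal : ℝ) : EReal) := by
  rw [robj, EReal.coe_add, EReal.coe_mul, EReal.coe_ennreal_toReal hX]

lemma lpos_zero (P : Measure Ω) : Lpos P fun _ => 0 :=
  ⟨measurable_const, Eventually.of_forall fun _ => le_rfl⟩

lemma budget_zero (P : Measure Ω) (ρ : Ω → ℝ) : (budget P ρ fun _ => 0) = 0 := by
  simp only [budget, mul_zero, ENNReal.ofReal_zero, lintegral_zero]

lemma budget_ne_top_of_isMinOn (hlam : 0 < lam)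
    (hmin : IsMinOn (robj P m a₀ a₁ ρ lam) {Y | Lpos P Y} X) : budget P ρ X ≠ ⊤ := by
  intro htop
  have hzero := isMinOn_iff.1 hmin _ (lpos_zero P)
  rw [robj_eq_top hlam htop, robj_eq_coe (by simp only [budget_zero, ne_eq, ENNReal.zero_ne_top,
    not_false_eq_true]), top_le_iff] at hzero
  exact EReal.coe_ne_top _ hzero

variable {A : Set Ω} {ε : ℝ}

lemma Lpos.add_indicator (hX : Lpos P X) (hA : MeasurableSet A) (hε : 0 ≤ ε) :
    Lpos P (X + A.indicator fun _ => ε) := by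
  refine ⟨hX.1.add (measurable_const.indicator hA), ?_⟩
  filter_upwards [hX.2] with ω hω using add_nonneg hω (indicator_nonneg (fun _ _ => hε) ω)

lemma budget_add_indicator (hρ : Lpos P ρ) (hX : Lpos P X) (hA : MeasurableSet A) (hε : 0 ≤ ε) :
    budget P ρ (X + A.indicator fun _ => ε) =
      budget P ρ X + ENNReal.ofReal ε * ∫⁻ ω in A, ENNReal.ofReal (ρ ω) ∂P := by
  have hmeas : Measurable fun ω => ENNReal.ofReal (ρ ω * X ω) :=
    (hρ.1.mul hX.1).ennreal_ofReal
  rw [budget, budget, ← lintegral_const_mul _ hρ.1.ennreal_ofReal, ← lintegral_indicator hA,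
    ← lintegral_add_left hmeas]
  refine lintegral_congr_ae ?_
  filter_upwards [hρ.2, hX.2] with ω hρω hω
  by_cases hωA : ω ∈ A
  · simp only [Pi.add_apply, indicator_of_mem hωA, mul_add, ← ENNReal.ofReal_mul hε,
      ENNReal.ofReal_add (mul_nonneg hρω hω) (mul_nonneg hρω hε), mul_comm ε]
  · simp only [Pi.add_apply, indicator_of_notMem hωA, add_zero]

end Budget

section FirstOrder

variable [IsFiniteMeasure P] [NeZero P] [IsLocallyFiniteMeasure m]

lemma psi_mul_sub_le_of_ttrans_eq (ha₀ : 0 < a₀) (hm : m (Icc a₀ a₁) ≠ 0) (hX : Lpos P X) {ω : Ω}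
    (hz : 0 < lam * ρ ω) (hω : Ttrans P m a₀ a₁ lam ρ X ω = X ω) {y : ℝ} (hy : 0 ≤ y) :
    psi P m a₀ a₁ X (X ω) * (y - X ω) ≤ lam * ρ ω * (y - X ω) := by
  obtain ⟨hnonneg, hle, heq⟩ := (ttrans_eq_iff ha₀ hm hX hz).1 hω
  rcases hnonneg.eq_or_lt with h0 | hpos
  · rw [← h0, sub_zero, h0]
    gcongr
  · rw [heq hpos]

lemma integrable_psi_mul_sub_of_ttrans_ae_eq (ha₀ : 0 < a₀) (hm : m (Icc a₀ a₁) ≠ 0)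
    (hρ : Measurable ρ) (hρ_pos : ∀ᵐ ω ∂P, 0 < ρ ω) (hlam : 0 < lam) (hX : Lpos P X)
    (hY : Lpos P Y) (hfix : Ttrans P m a₀ a₁ lam ρ X =ᵐ[P] X) (hbX : budget P ρ X ≠ ⊤)
    (hbY : budget P ρ Y ≠ ⊤) :
    Integrable (fun ω => psi P m a₀ a₁ X (X ω) * (Y ω - X ω)) P := by
  have hρ_lpos : Lpos P ρ := ⟨hρ, hρ_pos.mono fun _ => le_of_lt⟩
  have hintX := ((budget_ne_top_iff hρ_lpos hX).1 hbX).const_mul lam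
  have hintY := ((budget_ne_top_iff hρ_lpos hY).1 hbY).const_mul lam
  refine (hintY.add hintX).mono' ((integrable_psi ha₀ hX).aestronglyMeasurable.mul
    (hY.1.sub hX.1).aestronglyMeasurable) ?_
  filter_upwards [hρ_pos, hfix, hX.2, hY.2] with ω hρω hfixω hXω hYω
  have hz := mul_pos hlam hρω
  have hle := ((ttrans_eq_iff ha₀ hm hX hz).1 hfixω).2.1
  have hdiff : |Y ω - X ω| ≤ Y ω + X ω :=
    (abs_sub _ _).trans_eq (by rw [abs_of_nonneg hYω, abs_of_nonneg hXω])
  calc ‖psi P m a₀ a₁ X (X ω) * (Y ω - X ω)‖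
      = psi P m a₀ a₁ X (X ω) * |Y ω - X ω| := by
        rw [norm_mul, Real.norm_of_nonneg (psi_nonneg ha₀ hX _), Real.norm_eq_abs]
    _ ≤ lam * ρ ω * (Y ω + X ω) := by gcongr
    _ = lam * (ρ ω * Y ω) + lam * (ρ ω * X ω) := by ring

lemma isMinOn_robj_of_ttrans_ae_eq (ha₀ : 0 < a₀) (hm : m (Icc a₀ a₁) ≠ 0) (hρ : Measurable ρ)
    (hρ_pos : ∀ᵐ ω ∂P, 0 < ρ ω) (hlam : 0 < lam) (hX : Lpos P X)
    (hfix : Ttrans P m a₀ a₁ lam ρ X =ᵐ[P] X) (hb : budget P ρ X ≠ ⊤) :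
    IsMinOn (robj P m a₀ a₁ ρ lam) {Y | Lpos P Y} X := by
  refine isMinOn_iff.2 fun Y hY => ?_
  by_cases hbY : budget P ρ Y = ⊤
  · exact (robj_eq_top hlam hbY).symm ▸ le_top
  have hρ_lpos : Lpos P ρ := ⟨hρ, hρ_pos.mono fun _ => le_of_lt⟩
  have hintX := ((budget_ne_top_iff hρ_lpos hX).1 hb).const_mul lam
  have hintY := ((budget_ne_top_iff hρ_lpos hY).1 hbY).const_mul lam
  have hint := integrable_psi_mul_sub_of_ttrans_ae_eq ha₀ hm hρ hρ_pos hlam hX hY hfix hb hbY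
  have hwerm : werm P m a₀ a₁ X - werm P m a₀ a₁ Y ≤
      lam * (budget P ρ Y).toReal - lam * (budget P ρ X).toReal := calc
    werm P m a₀ a₁ X - werm P m a₀ a₁ Y
      ≤ ∫ ω, psi P m a₀ a₁ X (X ω) * (Y ω - X ω) ∂P := werm_sub_le ha₀ hX hY hint
    _ ≤ ∫ ω, lam * (ρ ω * Y ω) - lam * (ρ ω * X ω) ∂P := by
        refine integral_mono_ae hint (hintY.sub hintX) ?_
        filter_upwards [hρ_pos, hfix, hY.2] with ω hρω hfixω hYω
        refine (psi_mul_sub_le_of_ttrans_eq ha₀ hm hX (mul_pos hlam hρω) hfixω hYω).trans_eq ?_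
        ring
    _ = lam * (budget P ρ Y).toReal - lam * (budget P ρ X).toReal := by
        rw [integral_sub hintY hintX, integral_const_mul, integral_const_mul,
          toReal_budget hρ_lpos hX, toReal_budget hρ_lpos hY]
  rw [robj_eq_coe hb, robj_eq_coe hbY, EReal.coe_le_coe_iff]
  linarith

variable {A : Set Ω} {ε : ℝ}

lemma werm_add_indicator_le (ha₀ : 0 < a₀) (hX : Lpos P X) (hA : MeasurableSet A) (hε : 0 ≤ ε) :
    werm P m a₀ a₁ (X + A.indicator fun _ => ε) ≤ werm P m a₀ a₁ X -
      ε * (Real.exp (-a₁ * ε) * ∫ ω in A, psi P m a₀ a₁ X (X ω) ∂P) := by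
  set Y := X + A.indicator fun _ => ε
  have hY : Lpos P Y := hX.add_indicator hA hε
  have hXY : X ≤ᵐ[P] Y :=
    Eventually.of_forall fun ω => le_add_of_nonneg_right (indicator_nonneg (fun _ _ => hε) ω)
  have hprod : (fun ω => psi P m a₀ a₁ Y (Y ω) * (X ω - Y ω)) =
      A.indicator fun ω => -ε * psi P m a₀ a₁ Y (Y ω) := by
    ext ω
    by_cases hω : ω ∈ A
    · simp only [Y, Pi.add_apply, indicator_of_mem hω]
      ring
    · simp only [Y, Pi.add_apply, indicator_of_notMem hω, add_zero, sub_self, mul_zero]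
  have hint : Integrable (fun ω => psi P m a₀ a₁ Y (Y ω) * (X ω - Y ω)) P :=
    hprod ▸ ((integrable_psi ha₀ hY).const_mul (-ε)).indicator hA
  have hpsi : Real.exp (-a₁ * ε) * ∫ ω in A, psi P m a₀ a₁ X (X ω) ∂P ≤
      ∫ ω in A, psi P m a₀ a₁ Y (Y ω) ∂P := by
    rw [← integral_const_mul]
    refine setIntegral_mono_on ((integrable_psi ha₀ hX).const_mul _).integrableOn
      (integrable_psi ha₀ hY).integrableOn hA fun ω hω => ?_
    have hYω : Y ω = X ω + ε := by simp only [Y, Pi.add_apply, indicator_of_mem hω]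
    rw [hYω]
    exact (le_psi_add ha₀ hX (X ω) hε).trans (psi_le_psi_of_ae_le ha₀ hX hY hXY _)
  -- Taking the subgradient at the raised payoff `Y` bounds the decrease of `h` from below.
  have hwerm := werm_sub_le ha₀ hY hX hint
  rw [hprod, integral_indicator hA, integral_const_mul] at hwerm
  linarith [mul_le_mul_of_nonneg_left hpsi hε]

lemma setIntegral_psi_le_of_isMinOn (ha₀ : 0 < a₀) (hρ : Lpos P ρ) (hlam : 0 < lam)
    (hX : Lpos P X) (hmin : IsMinOn (robj P m a₀ a₁ ρ lam) {Y | Lpos P Y} X)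
    (hA : MeasurableSet A) (hρA : ∫⁻ ω in A, ENNReal.ofReal (ρ ω) ∂P ≠ ⊤) :
    ∫ ω in A, psi P m a₀ a₁ X (X ω) ∂P ≤
      lam * (∫⁻ ω in A, ENNReal.ofReal (ρ ω) ∂P).toReal := by
  set I := ∫ ω in A, psi P m a₀ a₁ X (X ω) ∂P
  set r := ∫⁻ ω in A, ENNReal.ofReal (ρ ω) ∂P
  have hb := budget_ne_top_of_isMinOn hlam hmin
  have hvar : ∀ ε > 0, Real.exp (-a₁ * ε) * I ≤ lam * r.toReal := by
    intro ε hε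
    have hbε : budget P ρ X + ENNReal.ofReal ε * r ≠ ⊤ :=
      ENNReal.add_ne_top.2 ⟨hb, ENNReal.mul_ne_top ENNReal.ofReal_ne_top hρA⟩
    have hle := isMinOn_iff.1 hmin _ (hX.add_indicator hA hε.le)
    rw [robj_eq_coe hb, robj_eq_coe (by rwa [budget_add_indicator hρ hX hA hε.le]),
      EReal.coe_le_coe_iff, budget_add_indicator hρ hX hA hε.le, ENNReal.toReal_add hb
        (ENNReal.mul_ne_top ENNReal.ofReal_ne_top hρA), ENNReal.toReal_mul,
      ENNReal.toReal_ofReal hε.le] at hle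
    have hdecr := werm_add_indicator_le (m := m) (a₁ := a₁) ha₀ hX hA hε.le
    refine le_of_mul_le_mul_left ?_ hε
    linarith
  have hlim : Tendsto (fun ε => Real.exp (-a₁ * ε) * I) (𝓝[>] 0) (𝓝 I) := by
    have hcont : Continuous fun ε => Real.exp (-a₁ * ε) * I := by fun_prop
    simpa only [mul_zero, Real.exp_zero, one_mul] using
      (hcont.tendsto 0).mono_left nhdsWithin_le_nhds
  exact le_of_tendsto hlim (eventually_mem_nhdsWithin.mono hvar)

lemma ae_psi_le_of_isMinOn (ha₀ : 0 < a₀) (hρ : Lpos P ρ) (hlam : 0 < lam)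
    (hX : Lpos P X) (hmin : IsMinOn (robj P m a₀ a₁ ρ lam) {Y | Lpos P Y} X) :
    ∀ᵐ ω ∂P, psi P m a₀ a₁ X (X ω) ≤ lam * ρ ω := by
  have hpsi_nonneg : ∀ ω, 0 ≤ psi P m a₀ a₁ X (X ω) := fun ω => psi_nonneg ha₀ hX (X ω)
  have hofReal : (fun ω => ENNReal.ofReal (psi P m a₀ a₁ X (X ω))) ≤ᵐ[P]
      fun ω => ENNReal.ofReal lam * ENNReal.ofReal (ρ ω) := by
    refine ae_le_of_forall_setLIntegral_le_of_sigmaFinite₀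
      (integrable_psi ha₀ hX).aestronglyMeasurable.aemeasurable.ennreal_ofReal fun A hA _ => ?_
    rw [lintegral_const_mul _ hρ.1.ennreal_ofReal]
    by_cases hρA : ∫⁻ ω in A, ENNReal.ofReal (ρ ω) ∂P = ⊤
    · rw [hρA, ENNReal.mul_top (ENNReal.ofReal_pos.2 hlam).ne']
      exact le_top
    · rw [← ofReal_integral_eq_lintegral_ofReal (integrable_psi ha₀ hX).integrableOn
        (Eventually.of_forall hpsi_nonneg), ← ENNReal.ofReal_toReal hρA,
        ← ENNReal.ofReal_mul hlam.le]
      exact ENNReal.ofReal_le_ofReal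
        (setIntegral_psi_le_of_isMinOn ha₀ hρ hlam hX hmin hA hρA)
  filter_upwards [hofReal, hρ.2] with ω hω hρω
  rwa [← ENNReal.ofReal_mul hlam.le, ENNReal.ofReal_le_ofReal_iff (mul_nonneg hlam.le hρω)] at hω

lemma ttrans_ae_le_of_isMinOn (ha₀ : 0 < a₀) (hm : m (Icc a₀ a₁) ≠ 0) (hρ : Measurable ρ)
    (hρ_pos : ∀ᵐ ω ∂P, 0 < ρ ω) (hlam : 0 < lam) (hX : Lpos P X)
    (hmin : IsMinOn (robj P m a₀ a₁ ρ lam) {Y | Lpos P Y} X) :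
    Ttrans P m a₀ a₁ lam ρ X ≤ᵐ[P] X := by
  filter_upwards [ae_psi_le_of_isMinOn ha₀ ⟨hρ, hρ_pos.mono fun _ => le_of_lt⟩ hlam hX hmin,
    hρ_pos, hX.2] with ω hω hρω hXω
  exact (ttrans_le_iff ha₀ hm hX (mul_pos hlam hρω) hXω).2 hω

end FirstOrder

/-! ### The iteration -/

section ExtendedLimits

lemma tendsto_toReal_iSup_ofReal {ι : Type*} [Preorder ι] {u : ι → ℝ} (hu : Monotone u)
    (hu_nonneg : ∀ i, 0 ≤ u i) (hfin : ⨆ i, ENNReal.ofReal (u i) ≠ ⊤) :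
    Tendsto u atTop (𝓝 (⨆ i, ENNReal.ofReal (u i)).toReal) := by
  have hsup := tendsto_atTop_iSup fun i j hij => ENNReal.ofReal_le_ofReal (hu hij)
  exact ((ENNReal.tendsto_toReal hfin).comp hsup).congr fun i => ENNReal.toReal_ofReal (hu_nonneg i)

variable {f : Ω → ℝ≥0∞}

lemma ae_ne_top_of_lintegral_ofReal_mul_ne_top (hρ : Measurable ρ) (hρ_pos : ∀ᵐ ω ∂P, 0 < ρ ω)
    (hf : Measurable f) (hint : ∫⁻ ω, ENNReal.ofReal (ρ ω) * f ω ∂P ≠ ⊤) :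
    ∀ᵐ ω ∂P, f ω ≠ ⊤ := by
  filter_upwards [ae_lt_top (hρ.ennreal_ofReal.mul hf) hint, hρ_pos] with ω hω hρω htop
  rw [Pi.mul_apply, htop, ENNReal.mul_top (ENNReal.ofReal_pos.2 hρω).ne'] at hω
  exact lt_irrefl _ hω

lemma budget_toReal (hρ : ∀ᵐ ω ∂P, 0 ≤ ρ ω) (hfin : ∀ᵐ ω ∂P, f ω ≠ ⊤) :
    (budget P ρ fun ω => (f ω).toReal) = ∫⁻ ω, ENNReal.ofReal (ρ ω) * f ω ∂P := by
  refine lintegral_congr_ae ?_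
  filter_upwards [hρ, hfin] with ω hρω hfω
  rw [ENNReal.ofReal_mul hρω, ENNReal.ofReal_toReal hfω]

end ExtendedLimits

/-- The iterates `Xₙ = 𝐓ⁿ0`. -/
def riskIter (P : Measure Ω) (m : Measure ℝ) (a₀ a₁ lam : ℝ) (ρ : Ω → ℝ) (n : ℕ) : Ω → ℝ :=
  (Ttrans P m a₀ a₁ lam ρ)^[n] fun _ => 0

/-- The pointwise limit `X_∞` of the iterates, written as a supremum in `[0,∞]`. -/
def riskIterLim (P : Measure Ω) (m : Measure ℝ) (a₀ a₁ lam : ℝ) (ρ : Ω → ℝ) (ω : Ω) : ℝ≥0∞ :=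
  ⨆ n, ENNReal.ofReal (riskIter P m a₀ a₁ lam ρ n ω)

lemma riskIter_succ (P : Measure Ω) (m : Measure ℝ) (a₀ a₁ lam : ℝ) (ρ : Ω → ℝ) (n : ℕ) :
    riskIter P m a₀ a₁ lam ρ (n + 1) = Ttrans P m a₀ a₁ lam ρ (riskIter P m a₀ a₁ lam ρ n) :=
  Function.iterate_succ_apply' _ _ _

lemma riskIter_nonneg (P : Measure Ω) (m : Measure ℝ) (a₀ a₁ lam : ℝ) (ρ : Ω → ℝ) (n : ℕ)
    (ω : Ω) : 0 ≤ riskIter P m a₀ a₁ lam ρ n ω := by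
  cases n with
  | zero => exact le_rfl
  | succ n =>
    rw [riskIter_succ]
    exact ttrans_nonneg P m a₀ a₁ lam ρ _ ω

section Iteration

variable [IsFiniteMeasure P] [NeZero P] [IsLocallyFiniteMeasure m]

lemma lpos_riskIter (ha₀ : 0 < a₀) (hm : m (Icc a₀ a₁) ≠ 0) (hρ : Measurable ρ) (n : ℕ) :
    Lpos P (riskIter P m a₀ a₁ lam ρ n) := by
  induction n with
  | zero => exact lpos_zero P
  | succ n ih =>
    rw [riskIter_succ]
    exact lpos_ttrans ha₀ hm hρ ih

lemma monotone_riskIter (ha₀ : 0 < a₀) (hm : m (Icc a₀ a₁) ≠ 0) (hρ : Measurable ρ) :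
    Monotone (riskIter P m a₀ a₁ lam ρ) := by
  refine monotone_nat_of_le_succ fun n => ?_
  induction n with
  | zero => exact riskIter_nonneg P m a₀ a₁ lam ρ 1
  | succ n ih =>
    rw [riskIter_succ _ _ _ _ _ _ n, riskIter_succ _ _ _ _ _ _ (n + 1)]
    exact ttrans_le_ttrans_of_ae_le ha₀ hm (lpos_riskIter ha₀ hm hρ n)
      (lpos_riskIter ha₀ hm hρ (n + 1)) (Eventually.of_forall ih)

lemma riskIter_ae_le_of_ttrans_ae_le (ha₀ : 0 < a₀) (hm : m (Icc a₀ a₁) ≠ 0) (hρ : Measurable ρ)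
    (hX : Lpos P X) (hTX : Ttrans P m a₀ a₁ lam ρ X ≤ᵐ[P] X) (n : ℕ) :
    riskIter P m a₀ a₁ lam ρ n ≤ᵐ[P] X := by
  induction n with
  | zero => exact hX.2
  | succ n ih =>
    rw [riskIter_succ]
    exact EventuallyLE.trans (Eventually.of_forall <|
      ttrans_le_ttrans_of_ae_le ha₀ hm (lpos_riskIter ha₀ hm hρ n) hX ih) hTX

lemma lintegral_riskIterLim_le_budget (ha₀ : 0 < a₀) (hm : m (Icc a₀ a₁) ≠ 0)
    (hρ : Lpos P ρ) (hX : Lpos P X) (hTX : Ttrans P m a₀ a₁ lam ρ X ≤ᵐ[P] X) :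
    ∫⁻ ω, ENNReal.ofReal (ρ ω) * riskIterLim P m a₀ a₁ lam ρ ω ∂P ≤ budget P ρ X := by
  refine lintegral_mono_ae ?_
  filter_upwards [hρ.2, ae_all_iff.2 (riskIter_ae_le_of_ttrans_ae_le ha₀ hm hρ.1 hX hTX)]
    with ω hρω hω
  rw [ENNReal.ofReal_mul hρω]
  gcongr
  exact iSup_le fun n => ENNReal.ofReal_le_ofReal (hω n)

lemma measurable_riskIterLim (ha₀ : 0 < a₀) (hm : m (Icc a₀ a₁) ≠ 0) (hρ : Measurable ρ) :
    Measurable (riskIterLim P m a₀ a₁ lam ρ) :=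
  Measurable.iSup fun n => (lpos_riskIter ha₀ hm hρ n).1.ennreal_ofReal

lemma lpos_toReal_riskIterLim (ha₀ : 0 < a₀) (hm : m (Icc a₀ a₁) ≠ 0) (hρ : Measurable ρ) :
    Lpos P fun ω => (riskIterLim P m a₀ a₁ lam ρ ω).toReal :=
  ⟨(measurable_riskIterLim ha₀ hm hρ).ennreal_toReal,
    Eventually.of_forall fun _ => ENNReal.toReal_nonneg⟩

lemma ttrans_toReal_riskIterLim_ae_eq (ha₀ : 0 < a₀) (hm : m (Icc a₀ a₁) ≠ 0) (hρ : Measurable ρ)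
    (hρ_pos : ∀ᵐ ω ∂P, 0 < ρ ω) (hlam : 0 < lam)
    (hfin : ∀ᵐ ω ∂P, riskIterLim P m a₀ a₁ lam ρ ω ≠ ⊤) :
    Ttrans P m a₀ a₁ lam ρ (fun ω => (riskIterLim P m a₀ a₁ lam ρ ω).toReal) =ᵐ[P]
      fun ω => (riskIterLim P m a₀ a₁ lam ρ ω).toReal := by
  have hlim : ∀ᵐ ω ∂P, Tendsto (fun n => riskIter P m a₀ a₁ lam ρ n ω) atTop
      (𝓝 (riskIterLim P m a₀ a₁ lam ρ ω).toReal) := by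
    filter_upwards [hfin] with ω hω
    exact tendsto_toReal_iSup_ofReal (fun _ _ h => monotone_riskIter ha₀ hm hρ h ω)
      (fun n => riskIter_nonneg P m a₀ a₁ lam ρ n ω) hω
  filter_upwards [hlim, hρ_pos] with ω hω hρω
  refine ttrans_eq_of_tendsto ha₀ hm (lpos_toReal_riskIterLim ha₀ hm hρ)
    (lpos_riskIter ha₀ hm hρ) hlim (mul_pos hlam hρω) ?_
  simpa only [riskIter_succ] using (tendsto_add_atTop_iff_nat 1).2 hω

lemma isMinOn_robj_toReal_riskIterLim (ha₀ : 0 < a₀) (hm : m (Icc a₀ a₁) ≠ 0) (hρ : Measurable ρ)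
    (hρ_pos : ∀ᵐ ω ∂P, 0 < ρ ω) (hlam : 0 < lam)
    (hint : ∫⁻ ω, ENNReal.ofReal (ρ ω) * riskIterLim P m a₀ a₁ lam ρ ω ∂P ≠ ⊤) :
    IsMinOn (robj P m a₀ a₁ ρ lam) {Y | Lpos P Y}
      fun ω => (riskIterLim P m a₀ a₁ lam ρ ω).toReal := by
  have hfin := ae_ne_top_of_lintegral_ofReal_mul_ne_top hρ hρ_pos
    (measurable_riskIterLim ha₀ hm hρ) hint
  refine isMinOn_robj_of_ttrans_ae_eq ha₀ hm hρ hρ_pos hlam (lpos_toReal_riskIterLim ha₀ hm hρ)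
    (ttrans_toReal_riskIterLim_ae_eq ha₀ hm hρ hρ_pos hlam hfin) ?_
  rwa [budget_toReal (hρ_pos.mono fun _ => le_of_lt) hfin]

end Iteration

theorem risk_minimization_iteration_general (P : Measure Ω) [IsFiniteMeasure P] [NeZero P]
    (a₀ a₁ : ℝ) (ha₀ : 0 < a₀)
    (m : Measure ℝ) [IsLocallyFiniteMeasure m] (hm : m (Icc a₀ a₁) ≠ 0)
    (ρ : Ω → ℝ) (hmρ : Measurable ρ) (hρ0 : ∀ᵐ ω ∂P, 0 < ρ ω)
    (lam : ℝ) (hlam : 0 < lam)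
    (Xseq : ℕ → Ω → ℝ)
    (hseq0 : Xseq 0 = fun _ => 0)
    (hseqrec : ∀ n, Xseq (n + 1) = Ttrans P m a₀ a₁ lam ρ (Xseq n)) :
    (∀ᵐ ω ∂P, ∀ n, Xseq n ω ≤ Xseq (n + 1) ω) ∧
    ((∃ X, Lpos P X ∧
        ∀ Y, Lpos P Y → robj P m a₀ a₁ ρ lam X ≤ robj P m a₀ a₁ ρ lam Y) ↔
      (∫⁻ ω, ENNReal.ofReal (ρ ω) * (⨆ n, ENNReal.ofReal (Xseq n ω)) ∂P) < ⊤) ∧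
    ((∫⁻ ω, ENNReal.ofReal (ρ ω) * (⨆ n, ENNReal.ofReal (Xseq n ω)) ∂P) < ⊤ →
      (Lpos P (fun ω => (⨆ n, ENNReal.ofReal (Xseq n ω)).toReal) ∧
        ∀ Y, Lpos P Y →
          robj P m a₀ a₁ ρ lam (fun ω => (⨆ n, ENNReal.ofReal (Xseq n ω)).toReal)
            ≤ robj P m a₀ a₁ ρ lam Y)) := by
  obtain rfl : Xseq = riskIter P m a₀ a₁ lam ρ := by
    funext n
    induction n with
    | zero => exact hseq0
    | succ n ih => rw [hseqrec, ih, riskIter_succ]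
  have hlim_pos : Lpos P fun ω => (riskIterLim P m a₀ a₁ lam ρ ω).toReal :=
    lpos_toReal_riskIterLim ha₀ hm hmρ
  have hlim_min := fun h =>
    isMinOn_robj_toReal_riskIterLim (P := P) ha₀ hm hmρ hρ0 hlam (ne_of_lt h)
  refine ⟨Eventually.of_forall fun ω n => monotone_riskIter ha₀ hm hmρ n.le_succ ω,
    ⟨?_, fun h => ⟨_, hlim_pos, hlim_min h⟩⟩, fun h => ⟨hlim_pos, hlim_min h⟩⟩
  rintro ⟨X, hX, hmin⟩
  have hTX := ttrans_ae_le_of_isMinOn ha₀ hm hmρ hρ0 hlam hX hmin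
  exact (lintegral_riskIterLim_le_budget ha₀ hm ⟨hmρ, hρ0.mono fun _ => le_of_lt⟩ hX hTX).trans_lt
    (budget_ne_top_of_isMinOn hlam hmin).lt_top

/-- with `X₀ ≡ 0` and `X_{n+1} = 𝐓Xₙ`, the sequence is a.s. nondecreasing
(hence `Xₙ ↗ X_∞ := ⨆ n Xₙ`, a `[0,∞]`-valued random variable); the problem of minimizing
`h(X) + λ E[ρX]` over `L⁰₊` has a solution iff `E[ρ X_∞] < ∞`, in which case `X_∞` is a
solution. -/
theorem risk_minimization_iteration (P : Measure Ω) [IsProbabilityMeasure P]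
    (a₀ a₁ : ℝ) (ha₀ : 0 < a₀) (ha₀₁ : a₀ < a₁)
    (m : Measure ℝ) [IsProbabilityMeasure m] (hm : m (Set.Icc a₀ a₁) = 1)
    (ρ : Ω → ℝ) (hmρ : Measurable ρ) (hρ0 : ∀ᵐ ω ∂P, 0 < ρ ω) (hρint : Integrable ρ P)
    (lam : ℝ) (hlam : 0 < lam)
    (Xseq : ℕ → Ω → ℝ)
    (hseq0 : Xseq 0 = fun _ => 0)
    (hseqrec : ∀ n, Xseq (n + 1) = Ttrans P m a₀ a₁ lam ρ (Xseq n)) :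
    (∀ᵐ ω ∂P, ∀ n, Xseq n ω ≤ Xseq (n + 1) ω) ∧
    ((∃ X, Lpos P X ∧
        ∀ Y, Lpos P Y → robj P m a₀ a₁ ρ lam X ≤ robj P m a₀ a₁ ρ lam Y) ↔
      (∫⁻ ω, ENNReal.ofReal (ρ ω) * (⨆ n, ENNReal.ofReal (Xseq n ω)) ∂P) < ⊤) ∧
    ((∫⁻ ω, ENNReal.ofReal (ρ ω) * (⨆ n, ENNReal.ofReal (Xseq n ω)) ∂P) < ⊤ →
      (Lpos P (fun ω => (⨆ n, ENNReal.ofReal (Xseq n ω)).toReal) ∧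
        ∀ Y, Lpos P Y →
          robj P m a₀ a₁ ρ lam (fun ω => (⨆ n, ENNReal.ofReal (Xseq n ω)).toReal)
            ≤ robj P m a₀ a₁ ρ lam Y)) := by
  exact risk_minimization_iteration_general P a₀ a₁ ha₀ m (hm ▸ one_ne_zero) ρ hmρ hρ0 lam hlam Xseq
    hseq0 hseqrec
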